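/- Let n ≥ 1 be an integer, ε_1, …, ε_n ∈ {−1, 1} and r_1, …, r_n > 0. For u ∈ C_c^∞(ℝⁿ) set Q(u) = ∫_{ℝⁿ} ( Σ_{j=1}^n (∂_j u)²/r_j² − 2 Σ_{1≤j<k≤n} ε_j ε_k (∂_j u)(∂_k u)/(r_j r_k) ) and F(u) = −∫_{ℝⁿ} ( Σ_{j=1}^n ε_j ∂_j∂_j u )² − Q(u). If there exist u₊, u₋ ∈ C_c^∞(ℝⁿ) with Q(u₊) > 0 and Q(u₋) < 0, then F is also indefinite: there exist v₊, v₋ ∈ C_c^∞(ℝⁿ) with F(v₊) > 0 and F(v₋) < 0. -/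

import Mathlib

open MeasureTheory Real

/-- The partial derivative `∂_j u` of a function `u : ℝⁿ → ℝ`. -/
noncomputable def pd {n : ℕ} (j : Fin n) (u : (Fin n → ℝ) → ℝ) (x : Fin n → ℝ) : ℝ :=
  fderiv ℝ u x (Pi.single j 1)

/-- Membership in `C_c^∞(ℝⁿ)`: smooth and compactly supported. -/
def IsCc {n : ℕ} (u : (Fin n → ℝ) → ℝ) : Prop :=
  ContDiff ℝ (⊤ : ℕ∞) u ∧ HasCompactSupport u

/-! Under `u^t(s) = t^{n/2-1} u(ts)` an integral `Q(u)` of a quadratic form in the gradient is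
invariant, while an integral `A(u)` of a quadratic form in the Hessian is multiplied by `t²`. Hence
`F = -A - Q` satisfies `F(u^t) = -t² A(u) - Q(u)`, which tends to `-Q(u)` as `t → 0`, so `F` becomes
positive on rescalings of `u₋`. In the other direction `F ≤ -Q` because `A ≥ 0`, so `u₊` itself
makes `F` negative. -/

open Filter Topology
open scoped ContDiff

section Rescaling

variable {E G : Type*} [NormedAddCommGroup E] [NormedSpace ℝ E]
  [NormedAddCommGroup G] [NormedSpace ℝ G]

theorem fderiv_const_smul_comp_smul (c t : ℝ) (u : E → G) :
    fderiv ℝ (fun x => c • u (t • x)) = fun x => (c * t) • fderiv ℝ u (t • x) := by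
  funext x
  change fderiv ℝ (c • fun y => u (t • y)) x = _
  rw [fderiv_const_smul_field, Pi.smul_apply, fderiv_comp_smul, smul_smul]

/-- The rescaling `u^t(s) = t^{n/2-1} u(ts)` of a function on an `n`-dimensional space, with the
exponent chosen so that quadratic integrals of the gradient are invariant. -/
noncomputable def rescale (t : ℝ) (u : E → G) (x : E) : G :=
  t ^ ((Module.finrank ℝ E : ℝ) / 2 - 1) • u (t • x)

theorem contDiff_rescale {k : WithTop ℕ∞} {u : E → G} (hu : ContDiff ℝ k u) (t : ℝ) :
    ContDiff ℝ k (rescale t u) :=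
  (hu.comp (contDiff_const_smul t)).const_smul _

theorem hasCompactSupport_rescale {u : E → G} (hu : HasCompactSupport u) {t : ℝ} (ht : t ≠ 0) :
    HasCompactSupport (rescale t u) :=
  (hu.comp_homeomorph (Homeomorph.smulOfNeZero t ht)).smul_left

theorem fderiv_rescale {t : ℝ} (ht : 0 < t) (u : E → G) :
    fderiv ℝ (rescale t u) =
      fun x => t ^ ((Module.finrank ℝ E : ℝ) / 2) • fderiv ℝ u (t • x) := by
  unfold rescale
  rw [fderiv_const_smul_comp_smul, ← Real.rpow_add_one ht.ne', sub_add_cancel]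

theorem fderiv_fderiv_rescale {t : ℝ} (ht : 0 < t) (u : E → G) :
    fderiv ℝ (fderiv ℝ (rescale t u)) =
      fun x => (t ^ ((Module.finrank ℝ E : ℝ) / 2) * t) • fderiv ℝ (fderiv ℝ u) (t • x) := by
  rw [fderiv_rescale ht]
  exact fderiv_const_smul_comp_smul _ t (fderiv ℝ u)

variable [MeasurableSpace E]

/-- The first-order quadratic functional `∫ q(Du)`. -/
noncomputable def gradientEnergy (q : QuadraticForm ℝ (E →L[ℝ] G)) (μ : Measure E)
    (u : E → G) : ℝ :=
  ∫ x, q (fderiv ℝ u x) ∂μ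

/-- The second-order quadratic functional `∫ p(D²u)`, with the Hessian `D²u` encoded as the
derivative of the derivative. -/
noncomputable def hessianEnergy (p : QuadraticForm ℝ (E →L[ℝ] E →L[ℝ] G)) (μ : Measure E)
    (u : E → G) : ℝ :=
  ∫ x, p (fderiv ℝ (fderiv ℝ u) x) ∂μ

/-- The functional `-∫ p(D²u) - ∫ q(Du)`, of which the second variation of the volume is the
instance with `p` the square of a trace. -/
noncomputable def secondVariation (p : QuadraticForm ℝ (E →L[ℝ] E →L[ℝ] G))
    (q : QuadraticForm ℝ (E →L[ℝ] G)) (μ : Measure E) (u : E → G) : ℝ :=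
  -hessianEnergy p μ u - gradientEnergy q μ u

theorem hessianEnergy_nonneg {p : QuadraticForm ℝ (E →L[ℝ] E →L[ℝ] G)} (hp : ∀ B, 0 ≤ p B)
    (μ : Measure E) (u : E → G) : 0 ≤ hessianEnergy p μ u :=
  integral_nonneg fun _ => hp _

variable [BorelSpace E] [FiniteDimensional ℝ E] (μ : Measure E) [μ.IsAddHaarMeasure]

theorem pow_finrank_mul_integral_comp_smul {t : ℝ} (ht : 0 < t) (f : E → ℝ) :
    t ^ Module.finrank ℝ E * ∫ x, f (t • x) ∂μ = ∫ x, f x ∂μ := by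
  rw [Measure.integral_comp_smul_of_nonneg μ f t (hR := ht.le), smul_eq_mul,
    mul_inv_cancel_left₀ (pow_pos ht _).ne']

theorem gradientEnergy_rescale (q : QuadraticForm ℝ (E →L[ℝ] G)) {t : ℝ} (ht : 0 < t)
    (u : E → G) : gradientEnergy q μ (rescale t u) = gradientEnergy q μ u := by
  have hpow : t ^ ((Module.finrank ℝ E : ℝ) / 2) * t ^ ((Module.finrank ℝ E : ℝ) / 2) =
      t ^ Module.finrank ℝ E := by
    rw [← Real.rpow_add ht, add_halves, Real.rpow_natCast]
  simp only [gradientEnergy, fderiv_rescale ht, QuadraticMap.map_smul, hpow, smul_eq_mul]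
  rw [integral_const_mul,
    pow_finrank_mul_integral_comp_smul μ ht fun x => q (fderiv ℝ u x)]

theorem hessianEnergy_rescale (p : QuadraticForm ℝ (E →L[ℝ] E →L[ℝ] G)) {t : ℝ} (ht : 0 < t)
    (u : E → G) : hessianEnergy p μ (rescale t u) = t ^ 2 * hessianEnergy p μ u := by
  have hpow : t ^ ((Module.finrank ℝ E : ℝ) / 2) * t * (t ^ ((Module.finrank ℝ E : ℝ) / 2) * t) =
      t ^ 2 * t ^ Module.finrank ℝ E := by
    rw [mul_mul_mul_comm, ← Real.rpow_add ht, add_halves, Real.rpow_natCast]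
    ring
  simp only [hessianEnergy, fderiv_fderiv_rescale ht, QuadraticMap.map_smul, hpow, smul_eq_mul]
  rw [integral_const_mul, mul_assoc,
    pow_finrank_mul_integral_comp_smul μ ht fun x => p (fderiv ℝ (fderiv ℝ u) x)]

theorem tendsto_secondVariation_rescale (p : QuadraticForm ℝ (E →L[ℝ] E →L[ℝ] G))
    (q : QuadraticForm ℝ (E →L[ℝ] G)) (u : E → G) :
    Tendsto (fun t => secondVariation p q μ (rescale t u)) (𝓝[>] 0)
      (𝓝 (-gradientEnergy q μ u)) := by
  have hcont : Continuous fun t : ℝ => -(t ^ 2 * hessianEnergy p μ u) - gradientEnergy q μ u := by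
    fun_prop
  have hlim := (hcont.tendsto 0).mono_left (nhdsWithin_le_nhds (s := Set.Ioi 0))
  simp only [ne_eq, OfNat.ofNat_ne_zero, not_false_eq_true, zero_pow, zero_mul, neg_zero,
    zero_sub] at hlim
  refine hlim.congr' ?_
  filter_upwards [self_mem_nhdsWithin] with t ht
  rw [secondVariation, hessianEnergy_rescale μ p ht, gradientEnergy_rescale μ q ht]

theorem second_variation_indefinite_of_Q_indefinite_general
    (p : QuadraticForm ℝ (E →L[ℝ] E →L[ℝ] G)) (hp : ∀ B, 0 ≤ p B)
    (q : QuadraticForm ℝ (E →L[ℝ] G)) {up um : E → G}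
    (hup : ContDiff ℝ ∞ up ∧ HasCompactSupport up)
    (hum : ContDiff ℝ ∞ um ∧ HasCompactSupport um)
    (hqp : 0 < gradientEnergy q μ up) (hqm : gradientEnergy q μ um < 0) :
    ∃ vp vm : E → G, (ContDiff ℝ ∞ vp ∧ HasCompactSupport vp) ∧
      (ContDiff ℝ ∞ vm ∧ HasCompactSupport vm) ∧
      0 < secondVariation p q μ vp ∧ secondVariation p q μ vm < 0 := by
  obtain ⟨t, hFt, ht⟩ :=
    (((tendsto_secondVariation_rescale μ p q um).eventually_const_lt (neg_pos.2 hqm)).and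
      self_mem_nhdsWithin).exists
  have ht0 : t ≠ 0 := ne_of_gt ht
  refine ⟨rescale t um, up, ⟨contDiff_rescale hum.1 t, hasCompactSupport_rescale hum.2 ht0⟩, hup,
    hFt, ?_⟩
  have hnonneg := hessianEnergy_nonneg hp μ up
  unfold secondVariation
  linarith

end Rescaling

section Hyperbolas

variable {n : ℕ}

theorem pd_pd_eq_fderiv_fderiv {u : (Fin n → ℝ) → ℝ} (hu : ContDiff ℝ 2 u) (j k : Fin n)
    (x : Fin n → ℝ) :
    pd j (pd k u) x = fderiv ℝ (fderiv ℝ u) x (Pi.single j 1) (Pi.single k 1) := by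
  have hdiff : DifferentiableAt ℝ (fderiv ℝ u) x :=
    (hu.fderiv_right (m := 1) (by norm_num)).differentiable one_ne_zero x
  change fderiv ℝ (fun y => fderiv ℝ u y (Pi.single k 1)) x (Pi.single j 1) = _
  rw [fderiv_clm_apply hdiff (differentiableAt_const _)]
  simp

/-- The gradient form `Σ ξ_j² / r_j² - 2 Σ_{j<k} ε_j ε_k ξ_j ξ_k / (r_j r_k)` of the product of
hyperbolas, as a form on covectors `ξ`. -/
noncomputable def hyperbolaGradientForm (ε r : Fin n → ℝ) :
    QuadraticForm ℝ ((Fin n → ℝ) →L[ℝ] ℝ) :=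
  let coord (j : Fin n) : ((Fin n → ℝ) →L[ℝ] ℝ) →ₗ[ℝ] ℝ :=
    (ContinuousLinearMap.apply ℝ ℝ (Pi.single j 1)).toLinearMap
  ∑ j, (r j ^ 2)⁻¹ • QuadraticMap.sq.comp (coord j) -
    (2 : ℝ) • ∑ j, ∑ k,
      (if j < k then ε j * ε k / (r j * r k) else 0) •
        QuadraticMap.linMulLin (coord j) (coord k)

/-- The Hessian form `(Σ ε_j B(e_j, e_j))²`: the squared trace for the metric `diag(ε)`. -/
noncomputable def hyperbolaHessianForm (ε : Fin n → ℝ) :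
    QuadraticForm ℝ ((Fin n → ℝ) →L[ℝ] (Fin n → ℝ) →L[ℝ] ℝ) :=
  QuadraticMap.sq.comp (∑ j, ε j •
    ((ContinuousLinearMap.apply ℝ ℝ (Pi.single j 1)).comp
      (ContinuousLinearMap.apply ℝ ((Fin n → ℝ) →L[ℝ] ℝ) (Pi.single j 1))).toLinearMap)

theorem hyperbolaGradientForm_apply (ε r : Fin n → ℝ) (ξ : (Fin n → ℝ) →L[ℝ] ℝ) :
    hyperbolaGradientForm ε r ξ = ∑ j, ξ (Pi.single j 1) ^ 2 / r j ^ 2 - 2 * ∑ j, ∑ k,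
      if j < k then ε j * ε k * ξ (Pi.single j 1) * ξ (Pi.single k 1) / (r j * r k) else 0 := by
  simp only [hyperbolaGradientForm, sub_apply, smul_apply, sum_apply, QuadraticMap.comp_apply,
    QuadraticMap.sq_apply, QuadraticMap.linMulLin_apply, ContinuousLinearMap.coe_coe,
    ContinuousLinearMap.apply_apply, smul_eq_mul, ite_mul, zero_mul]
  refine congrArg₂ (· - 2 * ·) (Finset.sum_congr rfl fun j _ => by ring)
    (Finset.sum_congr rfl fun j _ => Finset.sum_congr rfl fun k _ => ?_)
  congr 1
  ring

theorem hyperbolaHessianForm_apply (ε : Fin n → ℝ)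
    (B : (Fin n → ℝ) →L[ℝ] (Fin n → ℝ) →L[ℝ] ℝ) :
    hyperbolaHessianForm ε B = (∑ j, ε j * B (Pi.single j 1) (Pi.single j 1)) ^ 2 := by
  simp [hyperbolaHessianForm, sq]

theorem hyperbolaHessianForm_nonneg (ε : Fin n → ℝ)
    (B : (Fin n → ℝ) →L[ℝ] (Fin n → ℝ) →L[ℝ] ℝ) : 0 ≤ hyperbolaHessianForm ε B :=
  mul_self_nonneg _

theorem gradientEnergy_hyperbolaGradientForm (ε r : Fin n → ℝ) (u : (Fin n → ℝ) → ℝ) :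
    gradientEnergy (hyperbolaGradientForm ε r) volume u =
      ∫ x, (∑ j, (pd j u x) ^ 2 / (r j) ^ 2
        - 2 * ∑ j, ∑ k,
          (if j < k then ε j * ε k * pd j u x * pd k u x / (r j * r k) else 0)) := by
  simp only [gradientEnergy, hyperbolaGradientForm_apply, pd]

theorem hessianEnergy_hyperbolaHessianForm (ε : Fin n → ℝ) {u : (Fin n → ℝ) → ℝ}
    (hu : ContDiff ℝ 2 u) :
    hessianEnergy (hyperbolaHessianForm ε) volume u =
      ∫ x, (∑ j, ε j * pd j (pd j u) x) ^ 2 := by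
  simp only [hessianEnergy, hyperbolaHessianForm_apply, pd_pd_eq_fderiv_fderiv hu]

end Hyperbolas

/-- If the first-order quadratic functional `Q` is indefinite on `C_c^∞(ℝⁿ)`,
then so is the full second variation functional
`F(u) = −∫ (Σ ε_j ∂_j∂_j u)² − Q(u)` of the product of hyperbolas. -/
theorem second_variation_indefinite_of_Q_indefinite
    (n : ℕ) (hn : 1 ≤ n) (ε r : Fin n → ℝ)
    (hε : ∀ j, ε j = -1 ∨ ε j = 1) (hr : ∀ j, 0 < r j)
    (Q F : ((Fin n → ℝ) → ℝ) → ℝ)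
    (hQ : ∀ u, Q u = ∫ x, (∑ j, (pd j u x) ^ 2 / (r j) ^ 2
        - 2 * ∑ j, ∑ k, (if j < k then ε j * ε k * pd j u x * pd k u x / (r j * r k) else 0)))
    (hF : ∀ u, F u = -(∫ x, (∑ j, ε j * pd j (pd j u) x) ^ 2) - Q u)
    (up um : (Fin n → ℝ) → ℝ) (hup : IsCc up) (hum : IsCc um)
    (hQp : 0 < Q up) (hQm : Q um < 0) :
    ∃ vp vm : (Fin n → ℝ) → ℝ, IsCc vp ∧ IsCc vm ∧ 0 < F vp ∧ F vm < 0 := by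
  have hQ' u : Q u = gradientEnergy (hyperbolaGradientForm ε r) volume u :=
    (hQ u).trans (gradientEnergy_hyperbolaGradientForm ε r u).symm
  have hF' u (hu : IsCc u) :
      F u = secondVariation (hyperbolaHessianForm ε) (hyperbolaGradientForm ε r) volume u := by
    rw [hF, hQ', secondVariation,
      hessianEnergy_hyperbolaHessianForm ε (contDiff_infty.1 hu.1 2)]
  obtain ⟨vp, vm, hvp, hvm, hFp, hFm⟩ := second_variation_indefinite_of_Q_indefinite_general volume
    _ (hyperbolaHessianForm_nonneg ε) _ hup hum (hQ' up ▸ hQp) (hQ' um ▸ hQm)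
  exact ⟨vp, vm, hvp, hvm, hF' vp hvp ▸ hFp, hF' vm hvm ▸ hFm⟩
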